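/- Let K be a field, R = K[x_1,…,x_n], let I ⊂ R be a monomial ideal, and let ℓ0 ≥ 1 be an integer. Given positive integers w_1,…,w_n, let h : R → R be the K-algebra homomorphism with h(x_i) = x_i^{w_i}, and let I_W be the ideal generated by h(I). Then ℓ0 is the strong persistence index of I if and only if ℓ0 is the strong persistence index of I_W. -/

import Mathlib

open MvPolynomial

/-- A monomial ideal: an ideal generated by monomials. -/
def IsMonomialIdeal {K : Type*} [Field K] {n : ℕ} (I : Ideal (MvPolynomial (Fin n) K)) : Prop :=
  ∃ S : Set (Fin n →₀ ℕ), I = Ideal.span ((fun d => monomial d (1 : K)) '' S)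

/-- `l` is the strong persistence index of `I`: `l` is the smallest positive integer such that
`(I^(k+1) : I) = I^k` for all `k ≥ l`. -/
def IsStrongPersistenceIndex {R : Type*} [CommRing R] (I : Ideal R) (l : ℕ) : Prop :=
  0 < l ∧ (∀ k, l ≤ k → (I ^ (k + 1)).colon I = I ^ k) ∧
    ∀ l', 0 < l' → (∀ k, l' ≤ k → (I ^ (k + 1)).colon I = I ^ k) → l ≤ l'

section WeightedMonomialIdeal

variable {K : Type*} [Field K] {n : ℕ} {A B I : Ideal (MvPolynomial (Fin n) K)}

theorem MvPolynomial.mem_ideal_of_forall_monomial_mem {f : MvPolynomial (Fin n) K}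
    (h : ∀ e ∈ f.support, monomial e (1 : K) ∈ A) : f ∈ A := by
  rw [f.as_sum]
  refine Ideal.sum_mem _ fun e he => ?_
  have : monomial e (f.coeff e) = C (f.coeff e) * monomial e (1 : K) := by
    rw [C_mul_monomial, mul_one]
  rw [this]
  exact A.mul_mem_left _ (h e he)

theorem isMonomialIdeal_iff :
    IsMonomialIdeal A ↔ ∀ f ∈ A, ∀ e ∈ f.support, monomial e (1 : K) ∈ A := by
  constructor
  · rintro ⟨S, rfl⟩ f hf e he
    rw [mem_ideal_span_monomial_image] at hf ⊢
    intro d hd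
    rw [Finset.mem_singleton.mp (support_monomial_subset hd)]
    exact hf e he
  · intro h
    refine ⟨{e | monomial e (1 : K) ∈ A}, le_antisymm (fun f hf => ?_) ?_⟩
    · exact mem_ideal_of_forall_monomial_mem fun e he =>
        Ideal.subset_span ⟨e, h f hf e he, rfl⟩
    · rw [Ideal.span_le]
      rintro _ ⟨e, he, rfl⟩
      exact he

theorem IsMonomialIdeal.ext (hA : IsMonomialIdeal A) (hB : IsMonomialIdeal B)
    (h : ∀ e, monomial e (1 : K) ∈ A ↔ monomial e (1 : K) ∈ B) : A = B := by
  refine le_antisymm (fun f hf => ?_) fun f hf => ?_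
  · exact mem_ideal_of_forall_monomial_mem fun e he =>
      (h e).1 (isMonomialIdeal_iff.1 hA f hf e he)
  · exact mem_ideal_of_forall_monomial_mem fun e he =>
      (h e).2 (isMonomialIdeal_iff.1 hB f hf e he)

theorem IsMonomialIdeal.mul (hA : IsMonomialIdeal A) (hB : IsMonomialIdeal B) :
    IsMonomialIdeal (A * B) := by
  obtain ⟨S, rfl⟩ := hA
  obtain ⟨T, rfl⟩ := hB
  refine ⟨Set.image2 (· + ·) S T, ?_⟩
  rw [Ideal.span_mul_span', ← Set.image2_mul, Set.image2_image_left, Set.image2_image_right,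
    Set.image_image2]
  simp [monomial_mul]

theorem IsMonomialIdeal.pow (hA : IsMonomialIdeal A) (k : ℕ) : IsMonomialIdeal (A ^ k) := by
  induction k with
  | zero =>
    refine ⟨{0}, ?_⟩
    rw [pow_zero, Set.image_singleton, Ideal.one_eq_top, eq_comm, Ideal.eq_top_iff_one]
    exact Ideal.subset_span rfl
  | succ k ih => exact pow_succ A k ▸ ih.mul hA

theorem monomial_mem_colon_span {S : Set (Fin n →₀ ℕ)} {e : Fin n →₀ ℕ} :
    monomial e (1 : K) ∈ A.colon (Ideal.span ((fun d => monomial d (1 : K)) '' S)) ↔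
      ∀ s ∈ S, monomial (e + s) (1 : K) ∈ A := by
  simp [Submodule.mem_colon, monomial_mul]

theorem IsMonomialIdeal.colon (hA : IsMonomialIdeal A) (hI : IsMonomialIdeal I) :
    IsMonomialIdeal (A.colon I) := by
  obtain ⟨S, rfl⟩ := hI
  refine isMonomialIdeal_iff.2 fun f hf e he => monomial_mem_colon_span.2 fun s hs => ?_
  rw [Ideal.colon_span, Submodule.mem_colon] at hf
  refine isMonomialIdeal_iff.1 hA _ (hf _ ⟨s, hs, rfl⟩) _ ?_
  rw [mem_support_iff, smul_eq_mul, coeff_mul_monomial, mul_one]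
  exact mem_support_iff.1 he

/-- The exponent of the image of a monomial with exponent `d` under `x_i ↦ x_i ^ w i`. -/
noncomputable def weightExponent (w : Fin n → ℕ) (d : Fin n →₀ ℕ) : Fin n →₀ ℕ :=
  Finsupp.equivFunOnFinite.symm fun i => w i * d i

/-- The largest exponent `d` with `weightExponent w d ≤ e`, for positive weights. -/
noncomputable def floorExponent (w : Fin n → ℕ) (e : Fin n →₀ ℕ) : Fin n →₀ ℕ :=
  Finsupp.equivFunOnFinite.symm fun i => e i / w i

variable {w : Fin n → ℕ}

theorem weightExponent_le_iff (hw : ∀ i, 1 ≤ w i) {d e : Fin n →₀ ℕ} :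
    weightExponent w d ≤ e ↔ d ≤ floorExponent w e := by
  refine forall_congr' fun i => ?_
  simp [weightExponent, floorExponent, Nat.le_div_iff_mul_le (hw i), mul_comm]

theorem floorExponent_add_weightExponent (hw : ∀ i, 1 ≤ w i) (e d : Fin n →₀ ℕ) :
    floorExponent w (e + weightExponent w d) = floorExponent w e + d := by
  ext i
  simp [weightExponent, floorExponent, Nat.add_mul_div_left _ _ (hw i)]

theorem floorExponent_weightExponent (hw : ∀ i, 1 ≤ w i) (d : Fin n →₀ ℕ) :
    floorExponent w (weightExponent w d) = d := by
  ext i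
  simp [weightExponent, floorExponent, Nat.mul_div_cancel_left _ (hw i)]

theorem aeval_X_pow_monomial (d : Fin n →₀ ℕ) :
    aeval (fun i => (X i : MvPolynomial (Fin n) K) ^ w i) (monomial d (1 : K)) =
      monomial (weightExponent w d) 1 := by
  rw [aeval_monomial, monomial_eq, Finsupp.prod_fintype _ _ (by simp),
    Finsupp.prod_fintype _ _ (by simp)]
  simp [weightExponent, pow_mul]

theorem map_weight_span (S : Set (Fin n →₀ ℕ)) :
    Ideal.map (aeval fun i => (X i : MvPolynomial (Fin n) K) ^ w i)
        (Ideal.span ((fun d => monomial d (1 : K)) '' S)) =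
      Ideal.span ((fun d => monomial d (1 : K)) '' (weightExponent w '' S)) := by
  rw [Ideal.map_span, Set.image_image, Set.image_image]
  simp only [aeval_X_pow_monomial]

theorem IsMonomialIdeal.map_weight (hA : IsMonomialIdeal A) :
    IsMonomialIdeal (Ideal.map (aeval fun i => (X i : MvPolynomial (Fin n) K) ^ w i) A) := by
  obtain ⟨S, rfl⟩ := hA
  exact ⟨_, map_weight_span S⟩

theorem IsMonomialIdeal.monomial_mem_map_weight (hA : IsMonomialIdeal A) (hw : ∀ i, 1 ≤ w i)
    (e : Fin n →₀ ℕ) :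
    monomial e (1 : K) ∈ Ideal.map (aeval fun i => (X i : MvPolynomial (Fin n) K) ^ w i) A ↔
      monomial (floorExponent w e) (1 : K) ∈ A := by
  obtain ⟨S, rfl⟩ := hA
  classical
  rw [map_weight_span, mem_ideal_span_monomial_image, mem_ideal_span_monomial_image]
  simp [support_monomial, weightExponent_le_iff hw]

theorem IsMonomialIdeal.map_weight_inj (hA : IsMonomialIdeal A) (hB : IsMonomialIdeal B)
    (hw : ∀ i, 1 ≤ w i) :
    Ideal.map (aeval fun i => (X i : MvPolynomial (Fin n) K) ^ w i) A =
      Ideal.map (aeval fun i => (X i : MvPolynomial (Fin n) K) ^ w i) B ↔ A = B := by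
  refine ⟨fun h => hA.ext hB fun e => ?_, fun h => h ▸ rfl⟩
  rw [← floorExponent_weightExponent hw e, ← hA.monomial_mem_map_weight hw,
    ← hB.monomial_mem_map_weight hw, h]

theorem IsMonomialIdeal.map_weight_colon (hA : IsMonomialIdeal A) (hI : IsMonomialIdeal I)
    (hw : ∀ i, 1 ≤ w i) :
    (Ideal.map (aeval fun i => (X i : MvPolynomial (Fin n) K) ^ w i) A).colon
        (Ideal.map (aeval fun i => (X i : MvPolynomial (Fin n) K) ^ w i) I) =
      Ideal.map (aeval fun i => (X i : MvPolynomial (Fin n) K) ^ w i) (A.colon I) := by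
  refine (hA.map_weight.colon hI.map_weight).ext (hA.colon hI).map_weight fun e => ?_
  rw [(hA.colon hI).monomial_mem_map_weight hw]
  obtain ⟨S, rfl⟩ := hI
  rw [map_weight_span, monomial_mem_colon_span, monomial_mem_colon_span, Set.forall_mem_image]
  simp only [hA.monomial_mem_map_weight hw, floorExponent_add_weightExponent hw]

end WeightedMonomialIdeal

theorem stmt_5 {K : Type*} [Field K] {n : ℕ} (I : Ideal (MvPolynomial (Fin n) K))
    (hI : IsMonomialIdeal I) (l0 : ℕ) (hl0 : 1 ≤ l0)
    (w : Fin n → ℕ) (hw : ∀ i, 1 ≤ w i) :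
    IsStrongPersistenceIndex I l0 ↔
      IsStrongPersistenceIndex
        (Ideal.map (aeval fun i => (X i : MvPolynomial (Fin n) K) ^ w i) I) l0 := by
  simp only [IsStrongPersistenceIndex, ← Ideal.map_pow, (hI.pow _).map_weight_colon hI hw,
    ((hI.pow _).colon hI).map_weight_inj (hI.pow _) hw]
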